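/- Chain rule of relative entropy under a measurable map: Let X and Y be standard Borel measurable spaces, let q and p be probability measures on X, and let D : X → Y be a measurable map. Then the Kullback–Leibler divergence decomposes as KL(q ‖ p) = KL(D#q ‖ D#p) + ∫ KL(q(·|D = y) ‖ p(·|D = y)) d(D#q)(y), where D#q and D#p denote the pushforward measures of q and p under D, and q(·|D = y), p(·|D = y) denote regular conditional distributions of the identity given D under q and p respectively. -/

import Mathlib

open MeasureTheory ProbabilityTheory

/-- Kullback–Leibler divergence `∫ log (dq/dp) dq`, taken to be `+∞` when `q` is not
absolutely continuous with respect to `p` (or when the log-likelihood ratio fails to be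
integrable, which for probability measures also corresponds to infinite divergence). -/
noncomputable def klDiv {X : Type*} [MeasurableSpace X] (q p : Measure X) : ENNReal :=
  open scoped Classical in
  if q ≪ p ∧ Integrable (llr q p) q then ENNReal.ofReal (∫ x, llr q p x ∂q) else ⊤

/-- For probability measures, `klDiv` agrees with Mathlib's divergence of finite measures. -/
lemma klDiv_eq_informationTheory_klDiv {X : Type*} [MeasurableSpace X] (q p : Measure X)
    [IsProbabilityMeasure q] [IsProbabilityMeasure p] :
    klDiv q p = InformationTheory.klDiv q p := by
  simp [klDiv, InformationTheory.klDiv_def]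

namespace InformationTheory

/-- The divergence is invariant under a measurable map with a measurable left inverse. -/
lemma klDiv_map_of_leftInverse {X Z : Type*} [MeasurableSpace X] [MeasurableSpace Z]
    (μ ν : Measure X) [IsFiniteMeasure μ] [IsFiniteMeasure ν] {g : X → Z} {h : Z → X}
    (hg : Measurable g) (hh : Measurable h) (hgh : Function.LeftInverse h g) :
    klDiv (μ.map g) (ν.map g) = klDiv μ ν := by
  refine le_antisymm (klDiv_map_le μ ν hg) ?_
  have := klDiv_map_le (μ.map g) (ν.map g) hh
  rwa [Measure.map_map hh hg, Measure.map_map hh hg, hgh.comp_eq_id, Measure.map_id,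
    Measure.map_id] at this

variable {α β : Type*} {mα : MeasurableSpace α} {mβ : MeasurableSpace β}
  [MeasurableSpace.CountableOrCountablyGenerated α β]

/-- The Radon-Nikodym derivative of composition products with the same first marginal is the
Radon-Nikodym derivative of the kernels. -/
lemma rnDeriv_compProd_right {μ : Measure α} [IsFiniteMeasure μ] {κ η : Kernel α β}
    [IsFiniteKernel κ] [IsFiniteKernel η] (h : ∀ᵐ a ∂μ, κ a ≪ η a) :
    (μ ⊗ₘ κ).rnDeriv (μ ⊗ₘ η) =ᵐ[μ ⊗ₘ η] fun z ↦ Kernel.rnDeriv κ η z.1 z.2 := by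
  have hm : Measurable fun z : α × β ↦ Kernel.rnDeriv κ η z.1 z.2 :=
    Kernel.measurable_rnDeriv κ η
  have hκ : κ =ᵐ[μ] η.withDensity (Kernel.rnDeriv κ η) := by
    filter_upwards [h] with a ha
    exact (Kernel.withDensity_rnDeriv_eq ha).symm
  have hprod : μ ⊗ₘ κ = (μ ⊗ₘ η).withDensity fun z ↦ Kernel.rnDeriv κ η z.1 z.2 := by
    rw [Measure.compProd_congr hκ]
    exact Measure.compProd_withDensity hm
  rw [hprod]
  exact Measure.rnDeriv_withDensity _ hm

/-- The divergence of composition products with the same first marginal is the average divergence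
of the kernels. -/
lemma klDiv_compProd_right (μ : Measure α) [IsFiniteMeasure μ] (κ η : Kernel α β)
    [IsFiniteKernel κ] [IsFiniteKernel η] :
    klDiv (μ ⊗ₘ κ) (μ ⊗ₘ η) = ∫⁻ a, klDiv (κ a) (η a) ∂μ := by
  by_cases h : ∀ᵐ a ∂μ, κ a ≪ η a
  · rw [klDiv_eq_lintegral_klFun_of_ac (Measure.absolutelyContinuous_compProd_right_iff.mpr h)]
    have hm : Measurable fun z : α × β ↦
        ENNReal.ofReal (klFun (Kernel.rnDeriv κ η z.1 z.2).toReal) :=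
      (measurable_klFun.comp (Kernel.measurable_rnDeriv κ η).ennreal_toReal).ennreal_ofReal
    calc ∫⁻ z, ENNReal.ofReal (klFun ((μ ⊗ₘ κ).rnDeriv (μ ⊗ₘ η) z).toReal) ∂(μ ⊗ₘ η)
    _ = ∫⁻ z, ENNReal.ofReal (klFun (Kernel.rnDeriv κ η z.1 z.2).toReal) ∂(μ ⊗ₘ η) := by
      refine lintegral_congr_ae ?_
      filter_upwards [rnDeriv_compProd_right h] with z hz
      rw [hz]
    _ = ∫⁻ a, ∫⁻ b, ENNReal.ofReal (klFun (Kernel.rnDeriv κ η a b).toReal) ∂(η a) ∂μ :=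
      Measure.lintegral_compProd hm
    _ = ∫⁻ a, klDiv (κ a) (η a) ∂μ := by
      refine lintegral_congr_ae ?_
      filter_upwards [h] with a ha
      rw [klDiv_eq_lintegral_klFun_of_ac ha]
      refine lintegral_congr_ae ?_
      filter_upwards [Kernel.rnDeriv_eq_rnDeriv_measure (κ := κ) (η := η) (a := a)] with b hb
      rw [hb]
  · rw [klDiv_of_not_ac (Measure.absolutelyContinuous_compProd_right_iff.not.mpr h), eq_comm,
      eq_top_iff]
    have hs : MeasurableSet {a | κ a ≪ η a}ᶜ :=
      (Kernel.measurableSet_absolutelyContinuous κ η).compl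
    calc (⊤ : ENNReal) = ⊤ * μ {a | κ a ≪ η a}ᶜ := (ENNReal.top_mul h).symm
    _ = ∫⁻ _ in {a | κ a ≪ η a}ᶜ, ⊤ ∂μ := (setLIntegral_const _ _).symm
    _ = ∫⁻ a in {a | κ a ≪ η a}ᶜ, klDiv (κ a) (η a) ∂μ :=
      setLIntegral_congr_fun hs fun a ha ↦ (klDiv_of_not_ac ha).symm
    _ ≤ ∫⁻ a, klDiv (κ a) (η a) ∂μ := setLIntegral_le_lintegral _ _

end InformationTheory

/-- **Chain rule of relative entropy under a measurable map**: for probability measures `q, p`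
on a standard Borel space `X` and a measurable map `D : X → Y` into a standard Borel space `Y`,
`KL(q ‖ p) = KL(D#q ‖ D#p) + ∫ KL(q(·|D = y) ‖ p(·|D = y)) d(D#q)(y)`, where the conditional
measures are the regular conditional distributions of the identity given `D`. -/
theorem klDiv_chain_rule {X Y : Type*}
    [MeasurableSpace X] [StandardBorelSpace X] [Nonempty X]
    [MeasurableSpace Y] [StandardBorelSpace Y] [Nonempty Y]
    (q p : Measure X) [IsProbabilityMeasure q] [IsProbabilityMeasure p]
    (D : X → Y) (hD : Measurable D) :
    klDiv q p =
      klDiv (q.map D) (p.map D)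
        + ∫⁻ y, klDiv (condDistrib id D q y) (condDistrib id D p y) ∂(q.map D) := by
  have := Measure.isProbabilityMeasure_map (μ := q) hD.aemeasurable
  have := Measure.isProbabilityMeasure_map (μ := p) hD.aemeasurable
  simp_rw [klDiv_eq_informationTheory_klDiv]
  rw [← InformationTheory.klDiv_compProd_right, ← InformationTheory.klDiv_compProd_eq_add,
    compProd_map_condDistrib measurable_id.aemeasurable,
    compProd_map_condDistrib measurable_id.aemeasurable]
  exact (InformationTheory.klDiv_map_of_leftInverse q p (hD.prodMk measurable_id) measurable_snd
    fun _ ↦ rfl).symm
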